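/- Let N ≥ 1, 1 ≤ p < ∞. Let g_1, …, g_N be i.i.d. random variables with density x ↦ exp(-|x|^p)/(2Γ(1+1/p)) on ℝ, set G = (g_1,…,g_N), and let Z be a standard exponential random variable (rate 1) independent of G. Then the random vector G/(‖G‖_p^p + Z)^{1/p} is uniformly distributed on the ball 𝔹_{N,p}. -/

import Mathlib

/-!
Write `S x = ∑ |x i| ^ p`. The pair `(G, Z)` has density proportional to `exp (-(S x + z))` on
`z > 0`, so after the substitution `s = S x + z` it has density proportional to `exp (-s)` on
`{S x < s}`. At a fixed level `s > 0` the vector `x` is therefore uniform on `{S x < s}`, and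
`x / s ^ (1 / p)` is uniform on the unit ball (`volume_slice`). Integrating the factor
`s ^ (N / p)` against `exp (-s)` gives `Γ(N / p + 1)` (`lintegral_gamma`), and Mathlib's formula
for the volume of the `ℓ^p` ball identifies the resulting constant as the inverse of that volume.
-/

open MeasureTheory Filter Set
open scoped ENNReal Topology

noncomputable section

/-- The open unit ball of the `ℓ^p` norm in `ℝ^N`. -/
def pBall (N : ℕ) (p : ℝ) : Set (Fin N → ℝ) := {x | ∑ i, |x i| ^ p < 1}

/-- The uniform (normalized Lebesgue) distribution on the `ℓ^p` ball. -/
def uniformBall (N : ℕ) (p : ℝ) : Measure (Fin N → ℝ) :=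
  (volume (pBall N p))⁻¹ • volume.restrict (pBall N p)

/-- The distribution `G_p` on `ℝ` with density `x ↦ exp(-|x|^p)/(2Γ(1+1/p))`. -/
def Gp (p : ℝ) : Measure ℝ :=
  volume.withDensity fun x =>
    ENNReal.ofReal (Real.exp (-|x| ^ p) / (2 * Real.Gamma (1 + 1 / p)))

/-- The standard exponential distribution (rate 1) on `ℝ`. -/
def expMeasure : Measure ℝ :=
  volume.withDensity ((Set.Ioi (0 : ℝ)).indicator fun y => ENNReal.ofReal (Real.exp (-y)))

/-- Tonelli for a product of one-variable functions over `Fin n`. -/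
lemma lintegral_pi_prod (n : ℕ) (μ : Fin n → Measure ℝ) [∀ i, SigmaFinite (μ i)]
    (f : Fin n → ℝ → ℝ≥0∞) (hf : ∀ i, Measurable (f i)) :
    ∫⁻ x, ∏ i, f i (x i) ∂(Measure.pi μ) = ∏ i, ∫⁻ y, f i y ∂(μ i) := by
  induction n with
  | zero => simp
  | succ n ih =>
    have hmp := (measurePreserving_piFinSuccAbove μ 0).symm
    rw [← hmp.lintegral_comp (by fun_prop), Fin.prod_univ_succ,
      ← ih (fun i => μ i.succ) (fun i => f i.succ) (fun i => hf _),
      ← lintegral_prod_mul (hf 0).aemeasurable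
        (Finset.measurable_prod _ fun i _ =>
          (hf i.succ).comp (measurable_pi_apply i)).aemeasurable]
    simp [Fin.prod_univ_succ, MeasurableEquiv.piFinSuccAbove, Fin.insertNthEquiv]

/-- A product of measures with density has the product of the densities as density. -/
lemma pi_withDensity (n : ℕ) (f : ℝ → ℝ≥0∞) (hf : Measurable f)
    [SigmaFinite ((volume : Measure ℝ).withDensity f)] :
    (Measure.pi fun _ : Fin n => (volume : Measure ℝ).withDensity f) =
      (volume : Measure (Fin n → ℝ)).withDensity fun x => ∏ i, f (x i) := by
  refine Measure.pi_eq fun s hs => ?_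
  rw [withDensity_apply _ (MeasurableSet.univ_pi hs), volume_pi, Measure.restrict_pi_pi,
    lintegral_pi_prod n _ (fun _ => f) fun _ => hf]
  exact Finset.prod_congr rfl fun i _ => (withDensity_apply _ (hs i)).symm

lemma prod_density (N : ℕ) (p : ℝ) (h : 0 ≤ 2 * Real.Gamma (1 + 1 / p)) (x : Fin N → ℝ) :
    ∏ i, ENNReal.ofReal (Real.exp (-|x i| ^ p) / (2 * Real.Gamma (1 + 1 / p))) =
      ENNReal.ofReal (Real.exp (-∑ i, |x i| ^ p)) *
        ENNReal.ofReal (((2 * Real.Gamma (1 + 1 / p)) ^ N)⁻¹) := by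
  rw [← ENNReal.ofReal_mul (Real.exp_pos _).le]
  rw [← ENNReal.ofReal_prod_of_nonneg fun i _ => div_nonneg (Real.exp_pos _).le h,
    Finset.prod_div_distrib, ← Real.exp_sum, Finset.sum_neg_distrib]
  simp [div_eq_mul_inv]

lemma lintegral_gamma {a : ℝ} (ha : 0 < a + 1) :
    ∫⁻ s in Ioi (0 : ℝ), ENNReal.ofReal (Real.exp (-s)) * ENNReal.ofReal (s ^ a) =
      ENNReal.ofReal (Real.Gamma (a + 1)) := by
  have h := Real.GammaIntegral_convergent ha
  rw [Real.Gamma_eq_integral ha, ofReal_integral_eq_lintegral_ofReal h]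
  · refine setLIntegral_congr_fun measurableSet_Ioi fun s _ => ?_
    simp only [add_sub_cancel_right]
    rw [ENNReal.ofReal_mul (Real.exp_pos _).le]
  · refine (ae_restrict_iff' measurableSet_Ioi).2 (ae_of_all _ fun s hs => ?_)
    exact mul_nonneg (Real.exp_pos _).le (Real.rpow_nonneg (le_of_lt hs) _)

/-- Rescaling by `s ^ (1 / p)` carries the slice at level `s` onto the unit ball. -/
lemma volume_slice (N : ℕ) {p : ℝ} (hp : 1 ≤ p) (A : Set (Fin N → ℝ)) {s : ℝ} (hs : 0 < s) :
    volume {x : Fin N → ℝ | ∑ j, |x j| ^ p < s ∧ (fun i => x i / s ^ (1 / p)) ∈ A} =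
      ENNReal.ofReal (s ^ ((N : ℝ) / p)) * volume (A ∩ pBall N p) := by
  have hp0 : 0 < p := by linarith
  have hr : 0 < s ^ (1 / p) := Real.rpow_pos_of_pos hs _
  have hrp : (s ^ (1 / p)) ^ p = s := by
    rw [← Real.rpow_mul hs.le, one_div_mul_cancel hp0.ne', Real.rpow_one]
  have hset : {x : Fin N → ℝ | ∑ j, |x j| ^ p < s ∧ (fun i => x i / s ^ (1 / p)) ∈ A} =
      ((s ^ (1 / p))⁻¹ • ·) ⁻¹' (A ∩ pBall N p) := by
    ext x
    have h1 : ((s ^ (1 / p))⁻¹ • x) = fun i => x i / s ^ (1 / p) := by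
      ext i; simp [div_eq_inv_mul]
    have h2 : ∑ i, |x i / s ^ (1 / p)| ^ p = (∑ j, |x j| ^ p) / s := by
      rw [Finset.sum_div]
      refine Finset.sum_congr rfl fun i _ => ?_
      rw [abs_div, abs_of_pos hr, Real.div_rpow (abs_nonneg _) hr.le, hrp]
    simp only [mem_ofPred_eq, mem_preimage, h1, mem_inter_iff, pBall, h2, div_lt_one hs]
    exact and_comm
  rw [hset, Measure.addHaar_preimage_smul volume (inv_ne_zero hr.ne')]
  congr 2
  rw [inv_pow, inv_inv, abs_of_pos (pow_pos hr _), Module.finrank_fin_fun, ← Real.rpow_natCast,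
    ← Real.rpow_mul hs.le]
  congr 1
  ring

theorem statement10 (N : ℕ) (hN : 1 ≤ N) (p : ℝ) (hp : 1 ≤ p) :
    -- with G = (g_1,…,g_N) i.i.d. G_p and Z standard exponential independent of G,
    -- G/(‖G‖_p^p + Z)^{1/p} is uniform on the ball 𝔹_{N,p}
    (((Measure.pi fun _ : Fin N => Gp p).prod expMeasure).map
        fun q => fun i => q.1 i / ((∑ j, |q.1 j| ^ p) + q.2) ^ (1 / p)) =
      uniformBall N p := by
  have hp0 : 0 < p := by linarith
  have hC : 0 < 2 * Real.Gamma (1 + 1 / p) := by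
    have := Real.Gamma_pos_of_pos (s := 1 + 1 / p) (by positivity)
    positivity
  have hG : 0 < Real.Gamma ((N : ℝ) / p + 1) := Real.Gamma_pos_of_pos (by positivity)
  set K : ℝ≥0∞ := ENNReal.ofReal (((2 * Real.Gamma (1 + 1 / p)) ^ N)⁻¹) with hK
  -- The volume formula says exactly that the constant produced below is `1 / vol`.
  have hvol : (volume (pBall N p))⁻¹ = K * ENNReal.ofReal (Real.Gamma ((N : ℝ) / p + 1)) := by
    have h := volume_sum_rpow_lt_one (Fin N) hp
    rw [Fintype.card_fin, add_comm (1 / p)] at h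
    rw [pBall, h, hK, ← ENNReal.ofReal_inv_of_pos (by positivity),
      ← ENNReal.ofReal_mul (by positivity), inv_div, div_eq_inv_mul]
  have hS : Measurable fun x : Fin N → ℝ => ∑ j, |x j| ^ p := by fun_prop
  set E : ℝ → ℝ≥0∞ := (Ioi (0 : ℝ)).indicator fun y => ENNReal.ofReal (Real.exp (-y)) with hE
  have hEm : Measurable E := Measurable.indicator (by fun_prop) measurableSet_Ioi
  have hsf : SigmaFinite ((volume : Measure ℝ).withDensity fun x =>
      ENNReal.ofReal (Real.exp (-|x| ^ p) / (2 * Real.Gamma (1 + 1 / p)))) := inferInstance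
  ext A hA
  have hTm : Measurable fun q : (Fin N → ℝ) × ℝ =>
      fun i => q.1 i / ((∑ j, |q.1 j| ^ p) + q.2) ^ (1 / p) := by fun_prop
  have hUm : Measurable fun q : (Fin N → ℝ) × ℝ => fun i => q.1 i / q.2 ^ (1 / p) := by fun_prop
  -- The set integrated over at level `s` after the substitution `s = ‖x‖_p^p + z`.
  let W : ℝ → Set (Fin N → ℝ) := fun s =>
    {x | ∑ j, |x j| ^ p < s ∧ (fun i => x i / s ^ (1 / p)) ∈ A}
  have hW : ∀ s, MeasurableSet (W s) := fun s =>
    (measurableSet_lt hS measurable_const).inter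
      ((hUm.comp (measurable_id.prodMk measurable_const)) hA)
  have hWm : MeasurableSet {q : (Fin N → ℝ) × ℝ | q.1 ∈ W q.2} :=
    (measurableSet_lt (hS.comp measurable_fst) measurable_snd).inter (hUm hA)
  rw [Measure.map_apply hTm hA, uniformBall, Measure.smul_apply, Measure.restrict_apply hA,
    smul_eq_mul, hvol]
  unfold Gp expMeasure
  rw [pi_withDensity N _ (by fun_prop), prod_withDensity (by fun_prop) hEm,
    withDensity_apply _ (hTm hA), ← lintegral_indicator (hTm hA), lintegral_prod]
  swap
  · exact (Measurable.indicator (by fun_prop) (hTm hA)).aemeasurable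
  calc _ = ∫⁻ x : Fin N → ℝ, ∫⁻ s : ℝ,
        K * ENNReal.ofReal (Real.exp (-s)) * (W s).indicator 1 x := by
        refine lintegral_congr fun x => ?_
        rw [← lintegral_sub_right_eq_self _ (∑ j, |x j| ^ p)]
        refine lintegral_congr fun s => ?_
        have hT : ((x, s - ∑ j, |x j| ^ p) ∈ (fun q : (Fin N → ℝ) × ℝ =>
            fun i => q.1 i / ((∑ j, |q.1 j| ^ p) + q.2) ^ (1 / p)) ⁻¹' A) ↔
            (fun i => x i / s ^ (1 / p)) ∈ A := by
          rw [mem_preimage]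
          simp only [add_sub_cancel]
        have hWx : x ∈ W s ↔ ∑ j, |x j| ^ p < s ∧ (fun i => x i / s ^ (1 / p)) ∈ A := Iff.rfl
        by_cases h1 : (fun i => x i / s ^ (1 / p)) ∈ A
        · rw [indicator_of_mem (hT.2 h1)]
          by_cases h2 : ∑ j, |x j| ^ p < s
          · rw [indicator_of_mem (hWx.2 ⟨h2, h1⟩)]
            simp only [prod_density N p hC.le, ← hK, hE, Pi.one_apply, mul_one]
            rw [indicator_of_mem (mem_Ioi.2 (sub_pos.2 h2)), mul_right_comm,
              ← ENNReal.ofReal_mul (Real.exp_pos _).le, ← Real.exp_add, mul_comm]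
            congr 3
            ring
          · rw [indicator_of_notMem fun h => h2 (hWx.1 h).1, mul_zero]
            simp only [hE]
            rw [indicator_of_notMem fun h => h2 (sub_pos.1 (mem_Ioi.1 h)), mul_zero]
        · rw [indicator_of_notMem fun h => h1 (hT.1 h),
            indicator_of_notMem fun h => h1 (hWx.1 h).2, mul_zero]
    _ = ∫⁻ s : ℝ, ∫⁻ x : Fin N → ℝ,
        K * ENNReal.ofReal (Real.exp (-s)) * (W s).indicator 1 x := by
        refine lintegral_lintegral_swap (Measurable.aemeasurable ?_)
        refine Measurable.mul (by fun_prop) ?_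
        exact (measurable_one.indicator hWm :
          Measurable ({q : (Fin N → ℝ) × ℝ | q.1 ∈ W q.2}.indicator (1 : (Fin N → ℝ) × ℝ → ℝ≥0∞)))
    _ = ∫⁻ s : ℝ, K * ENNReal.ofReal (Real.exp (-s)) * volume (W s) := by
        refine lintegral_congr fun s => ?_
        rw [lintegral_const_mul _ (measurable_one.indicator (hW s)), lintegral_indicator_one (hW s)]
    _ = ∫⁻ s in Ioi (0 : ℝ), K * volume (A ∩ pBall N p) *
          (ENNReal.ofReal (Real.exp (-s)) * ENNReal.ofReal (s ^ ((N : ℝ) / p))) := by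
        rw [← lintegral_indicator measurableSet_Ioi]
        refine lintegral_congr fun s => ?_
        by_cases hs : 0 < s
        · rw [indicator_of_mem (mem_Ioi.2 hs), volume_slice N hp A hs]
          ring
        -- `W s` is empty for `s ≤ 0`, since `‖x‖_p^p ≥ 0`.
        · have : W s = ∅ := eq_empty_of_forall_notMem fun x hx =>
            hs ((Finset.sum_nonneg fun i _ => Real.rpow_nonneg (abs_nonneg (x i)) p).trans_lt hx.1)
          rw [indicator_of_notMem (by simpa using hs), this, measure_empty, mul_zero]
    _ = _ := by
        rw [lintegral_const_mul _ (by fun_prop), lintegral_gamma (by positivity)]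
        ring

end
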